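/- Let A, B, C be a maximal positive solution of the SL(2,ℝ) negative cross curvature flow ODE system with A_0, B_0, C_0 > 0, B_0 > C_0, F_1(0) < 0, F_2(0) < 0, and A_0 + C_0 ≤ B_0. Then the solution blows up at a finite time T > 0: as t → T^-, C(t)/(8 sqrt(T - t)) → 1 and there exists a positive constant E such that A(t) sqrt(T - t)/E → 1 and B(t) sqrt(T - t)/E → 1; in particular A, B → ∞ and C → 0 and lim_{t→T^-} A/B = 1. -/

import Mathlib

/-!
The proof rests on the region `A + C ≤ B`, `F₁ ≤ 0`, which is forward invariant: at a zero of
`A + C - B` its derivative is `-64 / C`, and at a zero of `F₁` only `A` moves, and it increases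
(`add_le_of_initial`, `sl2F1_nonpos`). In this region `F₂ ≤ -4AB` and `F₃ ≥ 2AB`, so `A` and `B`
are nondecreasing and `C` is nonincreasing. Since `F₁ + F₃ ≥ 0` and `F₂ + F₃ ≤ 0`, the product
`AC` is nondecreasing, `BC` is nonincreasing, and `AC ≤ BC`.

* Finite lifespan (`lifespan_bound`): `A'/A ≥ 16 / C²` together with `AC ≤ B(0)C(0)` makes `A⁻²`
  decrease at a rate bounded away from zero.
* `C → 0` at the final time `T` (`tendsto_C_zero`): otherwise `A` and `B` would be bounded, the
  solution would have a positive limit, and Picard–Lindelöf would extend it (`exists_extension`).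
* `AC` and `BC` converge to positive limits `L ≤ N`, hence `A, B → ∞` and `A / B → L / N`. If
  `L < N`, then `B - A - C ≥ εB` near `T`, and since `(log (B / A))' = 2 F₃ (F₂ - F₁) / (ABC)²`
  with `F₂ - F₁ = -4 (A + B)(B - A - C)`, the function `log (B / A) + (4ε / 5) log A` is
  nonincreasing, which contradicts `A → ∞` (`bounded_log_of_gap`). So `A / B → 1`.
* Then `(C²)' = -4 F₁ F₂ / (AB)² → -64`, so `C ∼ 8 √(T - t)` by l'Hôpital's rule, and
  `A, B ∼ L / C ∼ (L / 8) / √(T - t)` (`asymptotics`).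
-/

/-- `F1 = -3A² + B² + C² - 2BC - 2AC - 2AB` for the `SL(2,ℝ)` cross curvature tensor. -/
def sl2F1 (A B C : ℝ) : ℝ :=
  -3 * A ^ 2 + B ^ 2 + C ^ 2 - 2 * B * C - 2 * A * C - 2 * A * B

/-- `F2 = -3B² + A² + C² + 2BC + 2AC - 2AB` for the `SL(2,ℝ)` cross curvature tensor. -/
def sl2F2 (A B C : ℝ) : ℝ :=
  -3 * B ^ 2 + A ^ 2 + C ^ 2 + 2 * B * C + 2 * A * C - 2 * A * B

/-- `F3 = -3C² + A² + B² + 2BC - 2AC + 2AB` for the `SL(2,ℝ)` cross curvature tensor. -/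
def sl2F3 (A B C : ℝ) : ℝ :=
  -3 * C ^ 2 + A ^ 2 + B ^ 2 + 2 * B * C - 2 * A * C + 2 * A * B

/-- A triple of functions solves the `SL(2,ℝ)` negative cross curvature flow ODE system
(with positivity) on a set `s ⊆ ℝ`. -/
def IsSolSL2 (A B C : ℝ → ℝ) (s : Set ℝ) : Prop :=
  ∀ t ∈ s,
    (0 < A t ∧ 0 < B t ∧ 0 < C t) ∧
    HasDerivAt A
      (-2 * A t * sl2F2 (A t) (B t) (C t) * sl2F3 (A t) (B t) (C t) /
        (A t * B t * C t) ^ 2) t ∧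
    HasDerivAt B
      (-2 * B t * sl2F3 (A t) (B t) (C t) * sl2F1 (A t) (B t) (C t) /
        (A t * B t * C t) ^ 2) t ∧
    HasDerivAt C
      (-2 * C t * sl2F1 (A t) (B t) (C t) * sl2F2 (A t) (B t) (C t) /
        (A t * B t * C t) ^ 2) t

/-- A maximal solution of the `SL(2,ℝ)` system on `{t | 0 ≤ t, t < T}` (`T ∈ (0,∞]` an
extended real): a solution admitting no extension to a strictly larger interval. -/
def IsMaxSolSL2 (A B C : ℝ → ℝ) (T : EReal) : Prop :=
  IsSolSL2 A B C {t : ℝ | 0 ≤ t ∧ (t : EReal) < T} ∧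
  ∀ (A' B' C' : ℝ → ℝ) (T' : EReal), T < T' →
    IsSolSL2 A' B' C' {t : ℝ | 0 ≤ t ∧ (t : EReal) < T'} →
    ¬ (∀ t : ℝ, 0 ≤ t → (t : EReal) < T → A' t = A t ∧ B' t = B t ∧ C' t = C t)

open Filter Topology Set

/-! ### One-variable calculus -/

lemma monotoneOn_Ico_of_hasDerivAt {f f' : ℝ → ℝ} {a S : ℝ}
    (hf : ∀ t ∈ Ico a S, HasDerivAt f (f' t) t) (h0 : ∀ t ∈ Ico a S, 0 ≤ f' t) :
    MonotoneOn f (Ico a S) := by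
  apply monotoneOn_of_deriv_nonneg (convex_Ico a S)
  · exact fun t ht => (hf t ht).continuousAt.continuousWithinAt
  · exact fun t ht => (hf t (interior_subset ht)).differentiableAt.differentiableWithinAt
  · intro t ht
    rw [(hf t (interior_subset ht)).deriv]
    exact h0 t (interior_subset ht)

lemma antitoneOn_Ico_of_hasDerivAt {f f' : ℝ → ℝ} {a S : ℝ}
    (hf : ∀ t ∈ Ico a S, HasDerivAt f (f' t) t) (h0 : ∀ t ∈ Ico a S, f' t ≤ 0) :
    AntitoneOn f (Ico a S) := by
  have := monotoneOn_Ico_of_hasDerivAt (f := fun t => -f t) (fun t ht => (hf t ht).neg)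
    (fun t ht => neg_nonneg.2 (h0 t ht))
  intro x hx y hy hxy
  exact neg_le_neg_iff.1 (this hx hy hxy)

/-- Barrier principle: a function that starts nonpositive and has negative derivative at each of
its zeros stays nonpositive. -/
lemma nonpos_of_deriv_neg_at_zeros {f f' : ℝ → ℝ} {S : ℝ}
    (hf : ∀ t ∈ Ico 0 S, HasDerivAt f (f' t) t) (h0 : f 0 ≤ 0)
    (hb : ∀ t ∈ Ico 0 S, f t = 0 → f' t < 0) : ∀ t ∈ Ico 0 S, f t ≤ 0 := by
  intro t ht
  have hsub : ∀ x ∈ Icc 0 t, x ∈ Ico 0 S := fun x hx => ⟨hx.1, hx.2.trans_lt ht.2⟩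
  exact image_le_of_deriv_right_lt_deriv_boundary (a := 0) (b := t) (f := f) (f' := f')
    (B := fun _ => 0) (B' := fun _ => 0)
    (fun x hx => (hf x (hsub x hx)).continuousAt.continuousWithinAt)
    (fun x hx => (hf x (hsub x (Ico_subset_Icc_self hx))).hasDerivWithinAt)
    h0 (fun x => hasDerivAt_const x 0)
    (fun x hx => hb x (hsub x (Ico_subset_Icc_self hx))) ⟨ht.1, le_rfl⟩

/-- Gluing of a left and a right branch at `S`: if the left branch and its derivative have the
limits prescribed by the right branch, then the glued function is differentiable at `S`. -/
lemma hasDerivAt_glue {f g d : ℝ → ℝ} {S e : ℝ} (hS : 0 < S)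
    (hf : ∀ t ∈ Ico 0 S, HasDerivAt f (d t) t)
    (hlim : Tendsto f (𝓝[<] S) (𝓝 (g S))) (hd : Tendsto d (𝓝[<] S) (𝓝 e))
    (hg : HasDerivAt g e S) :
    HasDerivAt (fun t => if t < S then f t else g t) e S := by
  set h : ℝ → ℝ := fun t => if t < S then f t else g t with hh
  have hder : ∀ t ∈ Ioo 0 S, HasDerivAt h (d t) t := by
    intro t ht
    apply (hf t ⟨ht.1.le, ht.2⟩).congr_of_eventuallyEq
    filter_upwards [Iio_mem_nhds ht.2] with x hx
    simp only [hh, if_pos (show x < S from hx)]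
  have hmem : Ioo 0 S ∈ 𝓝[<] S := Ioo_mem_nhdsLT hS
  have hleft : HasDerivWithinAt h e (Iic S) S := by
    apply hasDerivWithinAt_Iic_of_tendsto_deriv (s := Ioo 0 S)
    · exact fun t ht => (hder t ht).differentiableAt.differentiableWithinAt
    · have h1 : Tendsto h (𝓝[<] S) (𝓝 (h S)) := by
        have : h S = g S := by simp [hh]
        rw [this]
        apply hlim.congr'
        filter_upwards [self_mem_nhdsWithin] with x hx
        simp only [hh, if_pos (show x < S from hx)]
      exact h1.mono_left (nhdsWithin_mono _ Ioo_subset_Iio_self)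
    · exact hmem
    · apply hd.congr'
      filter_upwards [hmem] with x hx
      exact (hder x hx).deriv.symm
  have hright : HasDerivWithinAt h e (Ici S) S := by
    apply hg.hasDerivWithinAt.congr
    · intro x hx
      simp only [hh, if_neg (not_lt.2 (show S ≤ x from hx))]
    · simp [hh]
  have := hleft.union hright
  rwa [Iic_union_Ici, hasDerivWithinAt_univ] at this

/-! ### Continuation of solutions -/

/-- The vector field of the system on `ℝ × ℝ × ℝ`. -/
noncomputable def sl2Field (p : ℝ × ℝ × ℝ) : ℝ × ℝ × ℝ :=
  (-2 * p.1 * sl2F2 p.1 p.2.1 p.2.2 * sl2F3 p.1 p.2.1 p.2.2 / (p.1 * p.2.1 * p.2.2) ^ 2,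
   -2 * p.2.1 * sl2F3 p.1 p.2.1 p.2.2 * sl2F1 p.1 p.2.1 p.2.2 / (p.1 * p.2.1 * p.2.2) ^ 2,
   -2 * p.2.2 * sl2F1 p.1 p.2.1 p.2.2 * sl2F2 p.1 p.2.1 p.2.2 / (p.1 * p.2.1 * p.2.2) ^ 2)

lemma contDiffAt_sl2Field {a b c : ℝ} (ha : 0 < a) (hb : 0 < b) (hc : 0 < c) :
    ContDiffAt ℝ 1 sl2Field (a, b, c) := by
  have hne : ((a, b, c).1 * (a, b, c).2.1 * (a, b, c).2.2 : ℝ) ^ 2 ≠ 0 := by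
    simp only; positivity
  unfold sl2Field sl2F1 sl2F2 sl2F3
  refine ContDiffAt.prodMk ?_ (ContDiffAt.prodMk ?_ ?_)
  all_goals
    refine ContDiffAt.div ?_ ?_ hne
    · fun_prop
    · fun_prop

/-- A solution on `[0, S)` whose components have positive limits at `S` extends beyond `S`. -/
lemma exists_extension {A B C : ℝ → ℝ} {S a b c : ℝ} (hS : 0 < S)
    (h : IsSolSL2 A B C (Ico 0 S)) (ha : 0 < a) (hb : 0 < b) (hc : 0 < c)
    (hA : Tendsto A (𝓝[<] S) (𝓝 a)) (hB : Tendsto B (𝓝[<] S) (𝓝 b))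
    (hC : Tendsto C (𝓝[<] S) (𝓝 c)) :
    ∃ (A' B' C' : ℝ → ℝ) (S' : ℝ), S < S' ∧ IsSolSL2 A' B' C' (Ico 0 S') ∧
      ∀ t < S, A' t = A t ∧ B' t = B t ∧ C' t = C t := by
  have hcd := contDiffAt_sl2Field ha hb hc
  obtain ⟨α, hα0, ε, hε, hα⟩ :=
    hcd.exists_forall_mem_closedBall_exists_eq_forall_mem_Ioo_hasDerivAt₀ S
  have hder1 : ∀ t ∈ Ioo (S - ε) (S + ε),
      HasDerivAt (fun t => (α t).1) (sl2Field (α t)).1 t := fun t ht => (hα t ht).fst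
  have hder2 : ∀ t ∈ Ioo (S - ε) (S + ε),
      HasDerivAt (fun t => (α t).2.1) (sl2Field (α t)).2.1 t := fun t ht => (hα t ht).snd.fst
  have hder3 : ∀ t ∈ Ioo (S - ε) (S + ε),
      HasDerivAt (fun t => (α t).2.2) (sl2Field (α t)).2.2 t := fun t ht => (hα t ht).snd.snd
  have hSmem : S ∈ Ioo (S - ε) (S + ε) := ⟨by linarith, by linarith⟩
  have hpos : ∀ᶠ t in 𝓝 S, 0 < (α t).1 ∧ 0 < (α t).2.1 ∧ 0 < (α t).2.2 := by
    refine ((hder1 S hSmem).continuousAt.eventually (lt_mem_nhds ?_)).and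
      (((hder2 S hSmem).continuousAt.eventually (lt_mem_nhds ?_)).and
      ((hder3 S hSmem).continuousAt.eventually (lt_mem_nhds ?_))) <;> simpa [hα0]
  obtain ⟨δ, hδ, hδpos⟩ := Metric.eventually_nhds_iff.1 hpos
  have hlim : Tendsto (fun t => (A t, B t, C t)) (𝓝[<] S) (𝓝 (a, b, c)) :=
    hA.prodMk_nhds (hB.prodMk_nhds hC)
  have hF : Tendsto (fun t => sl2Field (A t, B t, C t)) (𝓝[<] S) (𝓝 (sl2Field (a, b, c))) :=
    hcd.continuousAt.tendsto.comp hlim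
  have hF1 := (continuous_fst.tendsto _).comp hF
  have hF2 := (continuous_fst.tendsto _).comp ((continuous_snd.tendsto _).comp hF)
  have hF3 := (continuous_snd.tendsto _).comp ((continuous_snd.tendsto _).comp hF)
  have gA := hasDerivAt_glue (f := A) (g := fun t => (α t).1) hS (fun t ht => (h t ht).2.1)
    (by simpa [hα0] using hA) hF1 (by simpa only [hα0] using hder1 S hSmem)
  have gB := hasDerivAt_glue (f := B) (g := fun t => (α t).2.1) hS (fun t ht => (h t ht).2.2.1)
    (by simpa [hα0] using hB) hF2 (by simpa only [hα0] using hder2 S hSmem)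
  have gC := hasDerivAt_glue (f := C) (g := fun t => (α t).2.2) hS (fun t ht => (h t ht).2.2.2)
    (by simpa [hα0] using hC) hF3 (by simpa only [hα0] using hder3 S hSmem)
  refine ⟨fun t => if t < S then A t else (α t).1, fun t => if t < S then B t else (α t).2.1,
    fun t => if t < S then C t else (α t).2.2, S + min ε δ, by linarith [lt_min hε hδ], ?_, ?_⟩
  · intro t ht
    rcases lt_trichotomy t S with hlt | rfl | hgt
    · have ev : ∀ᶠ x in 𝓝 t, x < S := Iio_mem_nhds hlt
      obtain ⟨hp, h1, h2, h3⟩ := h t ⟨ht.1, hlt⟩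
      simp only [if_pos hlt]
      refine ⟨hp, h1.congr_of_eventuallyEq ?_, h2.congr_of_eventuallyEq ?_,
        h3.congr_of_eventuallyEq ?_⟩ <;>
      · filter_upwards [ev] with x hx
        simp [hx]
    · simp only [lt_irrefl, if_false]
      refine ⟨hδpos (by simpa using hδ), ?_⟩
      rw [hα0]
      exact ⟨gA, gB, gC⟩
    · have hn : ¬ t < S := not_lt.2 hgt.le
      have ev : ∀ᶠ x in 𝓝 t, ¬ x < S := by
        filter_upwards [Ioi_mem_nhds hgt] with x hx using not_lt.2 (le_of_lt hx)
      have htε : t ∈ Ioo (S - ε) (S + ε) :=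
        ⟨by linarith, ht.2.trans_le (by linarith [min_le_left ε δ])⟩
      have htδ : dist t S < δ := by
        rw [Real.dist_eq, abs_of_pos (by linarith)]
        have := ht.2
        linarith [min_le_right ε δ]
      simp only [if_neg hn]
      refine ⟨hδpos htδ, (hder1 t htε).congr_of_eventuallyEq ?_,
        (hder2 t htε).congr_of_eventuallyEq ?_, (hder3 t htε).congr_of_eventuallyEq ?_⟩ <;>
      · filter_upwards [ev] with x hx
        simp [hx]
  · intro t ht
    simp [ht]

/-! ### Algebraic inequalities in the region `A + C ≤ B` -/

section Algebra

variable {a b c : ℝ}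

lemma sl2F2_le (ha : 0 < a) (hb : 0 < b) (hc : 0 < c) (h : a + c ≤ b) :
    sl2F2 a b c ≤ -(4 * a * b) := by
  have : sl2F2 a b c + 4 * a * b = (a + c - b) * (a + c + 3 * b) := by unfold sl2F2; ring
  nlinarith [mul_nonneg (sub_nonneg.2 h) (by positivity : 0 ≤ a + c + 3 * b)]

lemma le_sl2F3 (ha : 0 < a) (hb : 0 < b) (hc : 0 < c) (h : a + c ≤ b) :
    2 * a * b ≤ sl2F3 a b c := by
  have : sl2F3 a b c - 2 * a * b
      = (b - (a + c)) * (b + a + 3 * c) + 2 * a * (a + c) := by unfold sl2F3; ring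
  have h1 := mul_nonneg (sub_nonneg.2 h) (by positivity : 0 ≤ b + a + 3 * c)
  have h2 : 0 ≤ 2 * a * (a + c) := by positivity
  linarith

lemma neg_le_sl2F2 (ha : 0 < a) (hb : 0 < b) (hc : 0 < c) (h : a + c ≤ b) :
    -(5 * b ^ 2) ≤ sl2F2 a b c := by
  unfold sl2F2
  nlinarith [mul_pos hb hc, mul_pos ha hc, mul_pos ha hb, sq_nonneg a, sq_nonneg c]

lemma sl2F1_add_sl2F3 : sl2F1 a b c + sl2F3 a b c = 2 * (b - a - c) * (a + b + c) := by
  unfold sl2F1 sl2F3; ring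

lemma sl2F2_add_sl2F3 : sl2F2 a b c + sl2F3 a b c = -2 * (b - a - c) * (a + b - c) := by
  unfold sl2F2 sl2F3; ring

lemma sl2F2_sub_sl2F1 : sl2F2 a b c - sl2F1 a b c = -4 * (a + b) * (b - a - c) := by
  unfold sl2F1 sl2F2; ring

end Algebra

/-! ### Invariant region and monotone quantities -/

section Flow

variable {A B C : ℝ → ℝ} {S : ℝ}

lemma add_le_of_initial (h : IsSolSL2 A B C (Ico 0 S)) (h0 : A 0 + C 0 ≤ B 0) :
    ∀ t ∈ Ico 0 S, A t + C t ≤ B t := by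
  have key := nonpos_of_deriv_neg_at_zeros (f := fun t => A t + C t - B t)
    (fun t ht => ((h t ht).2.1.add (h t ht).2.2.2).sub (h t ht).2.2.1) (by linarith) ?_
  · intro t ht
    linarith [key t ht]
  · intro t ht hz
    obtain ⟨⟨ha, hb, hc⟩, -⟩ := h t ht
    have hB : B t = A t + C t := by linarith
    -- On the boundary, `F₁ = F₂ = -4AB` and `F₃ = 4AB`, so the derivative is `-64 / C`.
    have e1 : sl2F1 (A t) (B t) (C t) = -(4 * A t * B t) := by rw [hB]; unfold sl2F1; ring
    have e2 : sl2F2 (A t) (B t) (C t) = -(4 * A t * B t) := by rw [hB]; unfold sl2F2; ring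
    have e3 : sl2F3 (A t) (B t) (C t) = 4 * A t * B t := by rw [hB]; unfold sl2F3; ring
    rw [e1, e2, e3]
    have : -2 * A t * -(4 * A t * B t) * (4 * A t * B t) / (A t * B t * C t) ^ 2 +
        -2 * C t * -(4 * A t * B t) * -(4 * A t * B t) / (A t * B t * C t) ^ 2 -
        -2 * B t * (4 * A t * B t) * -(4 * A t * B t) / (A t * B t * C t) ^ 2
        = 32 * (A t - C t - B t) / C t ^ 2 := by
      field_simp
      ring
    rw [this]
    apply div_neg_of_neg_of_pos _ (by positivity)
    rw [hB]
    linarith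

lemma sl2F1_nonpos (h : IsSolSL2 A B C (Ico 0 S)) (h0 : A 0 + C 0 ≤ B 0)
    (hF : sl2F1 (A 0) (B 0) (C 0) ≤ 0) :
    ∀ t ∈ Ico 0 S, sl2F1 (A t) (B t) (C t) ≤ 0 := by
  have hw := add_le_of_initial h h0
  refine nonpos_of_deriv_neg_at_zeros (f := fun t => sl2F1 (A t) (B t) (C t))
    (f' := fun t =>
      (-6 * A t - 2 * C t - 2 * B t) *
        (-2 * A t * sl2F2 (A t) (B t) (C t) * sl2F3 (A t) (B t) (C t) / (A t * B t * C t) ^ 2)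
      + (2 * B t - 2 * C t - 2 * A t) *
        (-2 * B t * sl2F3 (A t) (B t) (C t) * sl2F1 (A t) (B t) (C t) / (A t * B t * C t) ^ 2)
      + (2 * C t - 2 * B t - 2 * A t) *
        (-2 * C t * sl2F1 (A t) (B t) (C t) * sl2F2 (A t) (B t) (C t) / (A t * B t * C t) ^ 2))
    ?_ hF ?_
  · intro t ht
    obtain ⟨-, dA, dB, dC⟩ := h t ht
    have := ((((((dA.pow 2).const_mul (-3)).add (dB.pow 2)).add (dC.pow 2)).sub
      ((dB.const_mul 2).mul dC)).sub ((dA.const_mul 2).mul dC)).sub ((dA.const_mul 2).mul dB)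
    refine this.congr_deriv ?_
    simp only [Nat.cast_ofNat, Nat.add_one_sub_one, pow_one]
    ring
  · intro t ht hz
    obtain ⟨⟨ha, hb, hc⟩, -⟩ := h t ht
    have h2 := sl2F2_le ha hb hc (hw t ht)
    have h3 := le_sl2F3 ha hb hc (hw t ht)
    have hab := mul_pos ha hb
    -- Where `F₁ = 0` only `A` moves, and it increases.
    simp only [hz, mul_zero, zero_mul, zero_div, add_zero]
    apply mul_neg_of_neg_of_pos (by linarith)
    apply div_pos _ (by positivity)
    have h23 : 0 < -sl2F2 (A t) (B t) (C t) * sl2F3 (A t) (B t) (C t) :=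
      mul_pos (by linarith) (by linarith)
    nlinarith [mul_pos ha h23]

lemma antitoneOn_C (h : IsSolSL2 A B C (Ico 0 S)) (h0 : A 0 + C 0 ≤ B 0)
    (hF : sl2F1 (A 0) (B 0) (C 0) ≤ 0) : AntitoneOn C (Ico 0 S) := by
  refine antitoneOn_Ico_of_hasDerivAt (fun t ht => (h t ht).2.2.2) fun t ht => ?_
  obtain ⟨⟨ha, hb, hc⟩, -⟩ := h t ht
  have h2 := sl2F2_le ha hb hc (add_le_of_initial h h0 t ht)
  have h1 := sl2F1_nonpos h h0 hF t ht
  have hab := mul_pos ha hb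
  apply div_nonpos_of_nonpos_of_nonneg _ (by positivity)
  nlinarith [mul_nonneg hc.le (mul_nonneg_of_nonpos_of_nonpos h1
    (by linarith : sl2F2 (A t) (B t) (C t) ≤ 0))]

lemma monotoneOn_A (h : IsSolSL2 A B C (Ico 0 S)) (h0 : A 0 + C 0 ≤ B 0) :
    MonotoneOn A (Ico 0 S) := by
  refine monotoneOn_Ico_of_hasDerivAt (fun t ht => (h t ht).2.1) fun t ht => ?_
  obtain ⟨⟨ha, hb, hc⟩, -⟩ := h t ht
  have h2 := sl2F2_le ha hb hc (add_le_of_initial h h0 t ht)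
  have h3 := le_sl2F3 ha hb hc (add_le_of_initial h h0 t ht)
  have hab := mul_pos ha hb
  apply div_nonneg _ (by positivity)
  have h23 : 0 < -sl2F2 (A t) (B t) (C t) * sl2F3 (A t) (B t) (C t) :=
    mul_pos (by linarith) (by linarith)
  nlinarith [mul_pos ha h23]

lemma monotoneOn_B (h : IsSolSL2 A B C (Ico 0 S)) (h0 : A 0 + C 0 ≤ B 0)
    (hF : sl2F1 (A 0) (B 0) (C 0) ≤ 0) : MonotoneOn B (Ico 0 S) := by
  refine monotoneOn_Ico_of_hasDerivAt (fun t ht => (h t ht).2.2.1) fun t ht => ?_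
  obtain ⟨⟨ha, hb, hc⟩, -⟩ := h t ht
  have h1 := sl2F1_nonpos h h0 hF t ht
  have h3 := le_sl2F3 ha hb hc (add_le_of_initial h h0 t ht)
  have hab := mul_pos ha hb
  apply div_nonneg _ (by positivity)
  have h13 : 0 ≤ sl2F3 (A t) (B t) (C t) * -sl2F1 (A t) (B t) (C t) :=
    mul_nonneg (by linarith) (by linarith)
  nlinarith [mul_nonneg hb.le h13]

/-- `AC` is nondecreasing because `(log AC)' = -2 F₂ (F₁ + F₃) / (ABC)²`. -/
lemma monotoneOn_AC (h : IsSolSL2 A B C (Ico 0 S)) (h0 : A 0 + C 0 ≤ B 0) :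
    MonotoneOn (fun t => A t * C t) (Ico 0 S) := by
  refine monotoneOn_Ico_of_hasDerivAt (fun t ht => (h t ht).2.1.mul (h t ht).2.2.2)
    fun t ht => ?_
  obtain ⟨⟨ha, hb, hc⟩, -⟩ := h t ht
  have hw := add_le_of_initial h h0 t ht
  have h2 := sl2F2_le ha hb hc hw
  have hab := mul_pos ha hb
  have h13 : 0 ≤ sl2F1 (A t) (B t) (C t) + sl2F3 (A t) (B t) (C t) := by
    rw [sl2F1_add_sl2F3]
    exact mul_nonneg (by linarith) (by linarith)
  have e : ∀ F1 F2 F3 P : ℝ, -2 * A t * F2 * F3 / P * C t + A t * (-2 * C t * F1 * F2 / P)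
      = 2 * (A t * C t) * (-F2 * (F1 + F3)) / P := by intros; ring
  rw [e]
  exact div_nonneg (mul_nonneg (by positivity) (mul_nonneg (by linarith) h13)) (by positivity)

/-- `BC` is nonincreasing because `(log BC)' = -2 F₁ (F₂ + F₃) / (ABC)²`. -/
lemma antitoneOn_BC (h : IsSolSL2 A B C (Ico 0 S)) (h0 : A 0 + C 0 ≤ B 0)
    (hF : sl2F1 (A 0) (B 0) (C 0) ≤ 0) : AntitoneOn (fun t => B t * C t) (Ico 0 S) := by
  refine antitoneOn_Ico_of_hasDerivAt (fun t ht => (h t ht).2.2.1.mul (h t ht).2.2.2)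
    fun t ht => ?_
  obtain ⟨⟨ha, hb, hc⟩, -⟩ := h t ht
  have hw := add_le_of_initial h h0 t ht
  have h1 := sl2F1_nonpos h h0 hF t ht
  have h23 : sl2F2 (A t) (B t) (C t) + sl2F3 (A t) (B t) (C t) ≤ 0 := by
    rw [sl2F2_add_sl2F3]
    exact mul_nonpos_of_nonpos_of_nonneg (by linarith) (by linarith)
  have e : ∀ F1 F2 F3 P : ℝ, -2 * B t * F3 * F1 / P * C t + B t * (-2 * C t * F1 * F2 / P)
      = -(2 * (B t * C t) * (F1 * (F2 + F3)) / P) := by intros; ring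
  rw [e, neg_nonpos]
  exact div_nonneg (mul_nonneg (by positivity)
    (mul_nonneg_of_nonpos_of_nonpos h1 h23)) (by positivity)

/-- Finite lifespan: `A'/A ≥ 16 / C²` and `AC ≤ BC ≤ B(0)C(0)` give
`(A⁻²)' ≤ -32 / (B(0)C(0))²`, while `A⁻² > 0`. -/
lemma lifespan_bound (h : IsSolSL2 A B C (Ico 0 S)) (h0 : A 0 + C 0 ≤ B 0)
    (hF : sl2F1 (A 0) (B 0) (C 0) ≤ 0) (hS : 0 < S) :
    S ≤ (B 0 * C 0) ^ 2 / (32 * A 0 ^ 2) := by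
  have m0 : (0 : ℝ) ∈ Ico 0 S := ⟨le_rfl, hS⟩
  obtain ⟨⟨ha0, hb0, hc0⟩, -⟩ := h 0 m0
  have anti : AntitoneOn (fun t => (A t ^ 2)⁻¹ + 32 / (B 0 * C 0) ^ 2 * t) (Ico 0 S) := by
    refine antitoneOn_Ico_of_hasDerivAt (fun t ht =>
      (((h t ht).2.1.pow 2).inv (pow_ne_zero 2 (h t ht).1.1.ne')).add
        ((hasDerivAt_id t).const_mul _)) fun t ht => ?_
    obtain ⟨⟨ha, hb, hc⟩, -⟩ := h t ht
    have hw := add_le_of_initial h h0 t ht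
    have h2 := sl2F2_le ha hb hc hw
    have h3 := le_sl2F3 ha hb hc hw
    have hab := mul_pos ha hb
    have hBC : B t * C t ≤ B 0 * C 0 := antitoneOn_BC h h0 hF m0 ht ht.1
    have hAC : A t * C t ≤ B 0 * C 0 := by nlinarith
    have h23 : 8 * (A t * B t) ^ 2 ≤ -sl2F2 (A t) (B t) (C t) * sl2F3 (A t) (B t) (C t) := by
      have := mul_le_mul (show 4 * A t * B t ≤ -sl2F2 (A t) (B t) (C t) by linarith) h3
        (by positivity) (by nlinarith)
      nlinarith
    have hsq : (A t * C t) ^ 2 ≤ (B 0 * C 0) ^ 2 := by gcongr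
    have i1 : 32 / (B 0 * C 0) ^ 2 ≤ 32 / (A t * C t) ^ 2 := by gcongr
    have i2 : 32 / (A t * C t) ^ 2 ≤
        4 * (-sl2F2 (A t) (B t) (C t) * sl2F3 (A t) (B t) (C t)) /
          (A t ^ 2 * (A t * B t * C t) ^ 2) := by
      rw [div_le_div_iff₀ (by positivity) (by positivity)]
      have := mul_le_mul_of_nonneg_left h23 (by positivity : 0 ≤ 4 * (A t * C t) ^ 2)
      nlinarith
    have e : -(((2 : ℕ) : ℝ) * A t ^ (2 - 1) *
        (-2 * A t * sl2F2 (A t) (B t) (C t) * sl2F3 (A t) (B t) (C t) /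
          (A t * B t * C t) ^ 2)) / (A t ^ 2) ^ 2
        = -(4 * (-sl2F2 (A t) (B t) (C t) * sl2F3 (A t) (B t) (C t)) /
          (A t ^ 2 * (A t * B t * C t) ^ 2)) := by
      simp only [Nat.cast_ofNat, Nat.add_one_sub_one, pow_one]
      field_simp
      ring
    simp only [Pi.pow_apply]
    rw [e]
    linarith
  by_contra hcon
  push Not at hcon
  set K := (B 0 * C 0) ^ 2 / (32 * A 0 ^ 2) with hK
  have hKpos : 0 ≤ K := by positivity
  have mK : K ∈ Ico 0 S := ⟨hKpos, hcon⟩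
  have hle := anti m0 mK hKpos
  have hpos : 0 < (A K ^ 2)⁻¹ := by have := (h K mK).1.1; positivity
  have e : 32 / (B 0 * C 0) ^ 2 * K = (A 0 ^ 2)⁻¹ := by
    rw [hK]; field_simp
  simp only [e, mul_zero, add_zero] at hle
  linarith

/-! ### Limits at the final time -/

lemma exists_tendsto_of_monotoneOn {f : ℝ → ℝ} (hS : 0 < S) {M : ℝ}
    (hf : MonotoneOn f (Ico 0 S)) (hM : ∀ t ∈ Ico 0 S, f t ≤ M) :
    ∃ l, f 0 ≤ l ∧ Tendsto f (𝓝[<] S) (𝓝 l) := by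
  have hlim := MonotoneOn.tendsto_nhdsWithin_Ioo_left (nonempty_Ioo.2 hS)
    (hf.mono Ioo_subset_Ico_self)
    ⟨M, by rintro _ ⟨t, ht, rfl⟩; exact hM t (Ioo_subset_Ico_self ht)⟩
  refine ⟨_, ge_of_tendsto hlim ?_, hlim⟩
  filter_upwards [Ioo_mem_nhdsLT hS] with t ht
  exact hf ⟨le_rfl, hS⟩ (Ioo_subset_Ico_self ht) ht.1.le

lemma exists_tendsto_of_antitoneOn {f : ℝ → ℝ} (hS : 0 < S) {m : ℝ}
    (hf : AntitoneOn f (Ico 0 S)) (hm : ∀ t ∈ Ico 0 S, m ≤ f t) :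
    ∃ l, m ≤ l ∧ (∀ t ∈ Ico 0 S, l ≤ f t) ∧ Tendsto f (𝓝[<] S) (𝓝 l) := by
  have hlim := AntitoneOn.tendsto_nhdsWithin_Ioo_left (nonempty_Ioo.2 hS)
    (hf.mono Ioo_subset_Ico_self)
    ⟨m, by rintro _ ⟨t, ht, rfl⟩; exact hm t (Ioo_subset_Ico_self ht)⟩
  refine ⟨_, ge_of_tendsto hlim ?_, fun t ht => le_of_tendsto hlim ?_, hlim⟩
  · filter_upwards [Ioo_mem_nhdsLT hS] with t ht
    exact hm t (Ioo_subset_Ico_self ht)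
  · filter_upwards [Ioo_mem_nhdsLT ht.2] with x hx
    exact hf ht ⟨ht.1.trans hx.1.le, hx.2⟩ hx.1.le

/-- If the solution cannot be extended past `S`, then `C → 0`: otherwise `A`, `B ≤ BC / C` would
stay bounded, and all three functions would have positive limits. -/
lemma tendsto_C_zero (h : IsSolSL2 A B C (Ico 0 S)) (h0 : A 0 + C 0 ≤ B 0)
    (hF : sl2F1 (A 0) (B 0) (C 0) ≤ 0) (hS : 0 < S)
    (hext : ¬ ∃ (A' B' C' : ℝ → ℝ) (S' : ℝ), S < S' ∧ IsSolSL2 A' B' C' (Ico 0 S') ∧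
      ∀ t < S, A' t = A t ∧ B' t = B t ∧ C' t = C t) :
    Tendsto C (𝓝[<] S) (𝓝 0) := by
  have m0 : (0 : ℝ) ∈ Ico 0 S := ⟨le_rfl, hS⟩
  obtain ⟨⟨ha0, hb0, hc0⟩, -⟩ := h 0 m0
  obtain ⟨c, hc, hcle, hlim⟩ := exists_tendsto_of_antitoneOn hS (antitoneOn_C h h0 hF)
    (m := 0) (fun t ht => (h t ht).1.2.2.le)
  rcases hc.eq_or_lt with rfl | hcpos
  · exact hlim
  exfalso
  have hBb : ∀ t ∈ Ico 0 S, B t ≤ B 0 * C 0 / c := by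
    intro t ht
    rw [le_div_iff₀ hcpos]
    exact (mul_le_mul_of_nonneg_left (hcle t ht) (h t ht).1.2.1.le).trans
      (antitoneOn_BC h h0 hF m0 ht ht.1)
  have hAb : ∀ t ∈ Ico 0 S, A t ≤ B 0 * C 0 / c := fun t ht => by
    have := add_le_of_initial h h0 t ht
    have := (h t ht).1.2.2
    linarith [hBb t ht]
  obtain ⟨a, ha, hAlim⟩ := exists_tendsto_of_monotoneOn hS (monotoneOn_A h h0) hAb
  obtain ⟨b, hb, hBlim⟩ := exists_tendsto_of_monotoneOn hS (monotoneOn_B h h0 hF) hBb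
  exact hext (exists_extension hS h (ha0.trans_le ha) (hb0.trans_le hb) hcpos hAlim hBlim hlim)

/-- The core of `A / B → 1`: if `B - A - C ≥ εB` near the final time, then
`log (B / A) + (4ε / 5) log A` is nonincreasing there, so `A` stays bounded. -/
lemma bounded_log_of_gap (h : IsSolSL2 A B C (Ico 0 S)) (h0 : A 0 + C 0 ≤ B 0) {ε t₀ : ℝ}
    (hε : 0 < ε) (ht₀ : t₀ ∈ Ico 0 S) (hgap : ∀ t ∈ Ico t₀ S, ε * B t ≤ B t - A t - C t) :
    ∃ M, ∀ t ∈ Ico t₀ S, Real.log (A t) ≤ M := by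
  have anti : AntitoneOn
      (fun t => Real.log (B t) - Real.log (A t) + 4 * ε / 5 * Real.log (A t)) (Ico t₀ S) := by
    refine antitoneOn_Ico_of_hasDerivAt (fun t ht => ?_) (fun t ht => ?_)
      (f' := fun t => 2 * sl2F3 (A t) (B t) (C t) / (A t * B t * C t) ^ 2 *
        (sl2F2 (A t) (B t) (C t) - sl2F1 (A t) (B t) (C t)
          - 4 * ε / 5 * sl2F2 (A t) (B t) (C t)))
    · obtain ⟨⟨ha, hb, hc⟩, dA, dB, -⟩ := h t ⟨ht₀.1.trans ht.1, ht.2⟩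
      refine (((dB.log hb.ne').sub (dA.log ha.ne')).add
        ((dA.log ha.ne').const_mul (4 * ε / 5))).congr_deriv ?_
      field_simp
      ring
    · have ht' : t ∈ Ico 0 S := ⟨ht₀.1.trans ht.1, ht.2⟩
      obtain ⟨⟨ha, hb, hc⟩, -⟩ := h t ht'
      have hw := add_le_of_initial h h0 t ht'
      have h3 := le_sl2F3 ha hb hc hw
      have h2 := neg_le_sl2F2 ha hb hc hw
      have hab := mul_pos ha hb
      have hg := hgap t ht
      apply mul_nonpos_of_nonneg_of_nonpos
      · exact div_nonneg (by linarith) (by positivity)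
      · rw [sl2F2_sub_sl2F1]
        have i1 : B t * (ε * B t) ≤ (A t + B t) * (B t - A t - C t) :=
          mul_le_mul (by linarith) hg (by positivity) (by positivity)
        have i2 := mul_le_mul_of_nonneg_left h2 (by positivity : 0 ≤ 4 * ε / 5)
        nlinarith
  refine ⟨(Real.log (B t₀) - Real.log (A t₀) + 4 * ε / 5 * Real.log (A t₀)) / (4 * ε / 5),
    fun t ht => ?_⟩
  have ht' : t ∈ Ico 0 S := ⟨ht₀.1.trans ht.1, ht.2⟩
  obtain ⟨⟨ha, hb, hc⟩, -⟩ := h t ht'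
  have hle := anti ⟨le_rfl, ht₀.2⟩ ht ht.1
  have hlog : Real.log (A t) ≤ Real.log (B t) :=
    Real.log_le_log ha (by linarith [add_le_of_initial h h0 t ht'])
  rw [le_div_iff₀ (by positivity)]
  simp only at hle
  linarith

/-- Asymptotics at a final time where `C → 0`. -/
lemma asymptotics (h : IsSolSL2 A B C (Ico 0 S)) (h0 : A 0 + C 0 ≤ B 0)
    (hF : sl2F1 (A 0) (B 0) (C 0) ≤ 0) (hS : 0 < S) (hC : Tendsto C (𝓝[<] S) (𝓝 0)) :
    Tendsto (fun t => C t / (8 * Real.sqrt (S - t))) (𝓝[<] S) (𝓝 1) ∧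
    (∃ E : ℝ, 0 < E ∧ Tendsto (fun t => A t * Real.sqrt (S - t) / E) (𝓝[<] S) (𝓝 1) ∧
      Tendsto (fun t => B t * Real.sqrt (S - t) / E) (𝓝[<] S) (𝓝 1)) ∧
    Tendsto A (𝓝[<] S) atTop ∧ Tendsto B (𝓝[<] S) atTop ∧
    Tendsto (fun t => A t / B t) (𝓝[<] S) (𝓝 1) := by
  have m0 : (0 : ℝ) ∈ Ico 0 S := ⟨le_rfl, hS⟩
  obtain ⟨⟨ha0, hb0, hc0⟩, -⟩ := h 0 m0
  have hw := add_le_of_initial h h0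
  have hev : ∀ᶠ t in 𝓝[<] S, t ∈ Ico 0 S := by
    filter_upwards [Ioo_mem_nhdsLT hS] with t ht using Ioo_subset_Ico_self ht
  have hACle : ∀ t ∈ Ico 0 S, A t * C t ≤ B t * C t := fun t ht =>
    mul_le_mul_of_nonneg_right (by linarith [hw t ht, (h t ht).1.2.2]) (h t ht).1.2.2.le
  obtain ⟨L, hL0, hL⟩ := exists_tendsto_of_monotoneOn hS (monotoneOn_AC h h0)
    (M := B 0 * C 0) (fun t ht =>
      (hACle t ht).trans (antitoneOn_BC h h0 hF m0 ht ht.1))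
  have hLpos : 0 < L := (mul_pos ha0 hc0).trans_le hL0
  obtain ⟨N, -, -, hN⟩ := exists_tendsto_of_antitoneOn hS (antitoneOn_BC h h0 hF) (m := 0)
    (fun t ht => (mul_pos (h t ht).1.2.1 (h t ht).1.2.2).le)
  have hLN : L ≤ N := le_of_tendsto_of_tendsto hL hN (by
    filter_upwards [hev] with t ht using hACle t ht)
  have hNpos : 0 < N := hLpos.trans_le hLN
  have hCpos : Tendsto C (𝓝[<] S) (𝓝[>] 0) :=
    tendsto_nhdsWithin_iff.2 ⟨hC, by filter_upwards [hev] with t ht using (h t ht).1.2.2⟩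
  have hCinv : Tendsto (fun t => (C t)⁻¹) (𝓝[<] S) atTop := tendsto_inv_nhdsGT_zero.comp hCpos
  have hAtop : Tendsto A (𝓝[<] S) atTop := by
    refine (hL.pos_mul_atTop hLpos hCinv).congr' ?_
    filter_upwards [hev] with t ht
    have := (h t ht).1.2.2.ne'
    field_simp
  have hBtop : Tendsto B (𝓝[<] S) atTop := by
    refine tendsto_atTop_mono' _ ?_ hAtop
    filter_upwards [hev] with t ht
    linarith [hw t ht, (h t ht).1.2.2]
  have hAB : Tendsto (fun t => A t / B t) (𝓝[<] S) (𝓝 (L / N)) := by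
    refine (hL.div hN hNpos.ne').congr' ?_
    filter_upwards [hev] with t ht
    have := (h t ht).1.2.2.ne'
    have := (h t ht).1.2.1.ne'
    simp only [Pi.div_apply]
    field_simp
  have hCB : Tendsto (fun t => C t / B t) (𝓝[<] S) (𝓝 0) := hC.div_atTop hBtop
  have hLNeq : L = N := by
    by_contra hne
    have hlt : L / N < 1 := (div_lt_one hNpos).2 (lt_of_le_of_ne hLN hne)
    have hgap : Tendsto (fun t => 1 - A t / B t - C t / B t) (𝓝[<] S) (𝓝 (1 - L / N - 0)) :=
      (tendsto_const_nhds.sub hAB).sub hCB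
    have hev2 : ∀ᶠ t in 𝓝[<] S, (1 - L / N) / 2 < 1 - A t / B t - C t / B t :=
      hgap.eventually (lt_mem_nhds (by linarith))
    obtain ⟨l, hl, hl2⟩ := mem_nhdsLT_iff_exists_Ioo_subset.1 (hev2.and hev)
    have hlS : l < S := hl
    have hmid : (l + S) / 2 ∈ Ioo l S := ⟨by linarith, by linarith⟩
    obtain ⟨M, hM⟩ := bounded_log_of_gap h h0 (ε := (1 - L / N) / 2) (t₀ := (l + S) / 2)
      (by linarith) (hl2 hmid).2 (by
        intro t ht
        obtain ⟨hg, htS⟩ := hl2 (show t ∈ Ioo l S from ⟨hmid.1.trans_le ht.1, ht.2⟩)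
        have hb := (h t htS).1.2.1
        have := mul_le_mul_of_nonneg_right hg.le hb.le
        have e : (1 - A t / B t - C t / B t) * B t = B t - A t - C t := by field_simp
        linarith)
    have hlogtop := Real.tendsto_log_atTop.comp hAtop
    obtain ⟨t, ht1, ht2⟩ := ((hlogtop.eventually_gt_atTop M).and
      (Ioo_mem_nhdsLT hmid.2)).exists
    exact absurd (hM t ⟨ht2.1.le, ht2.2⟩) (not_le.2 ht1)
  have hAB1 : Tendsto (fun t => A t / B t) (𝓝[<] S) (𝓝 1) := by
    rwa [hLNeq, div_self hNpos.ne'] at hAB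
  -- `(C²)' → -64`, expressed through `A / B → 1` and `C / B → 0`.
  have hq : Tendsto (fun t => -4 * (sl2F1 (A t / B t) 1 (C t / B t) *
      sl2F2 (A t / B t) 1 (C t / B t)) / (A t / B t) ^ 2 / (-1)) (𝓝[<] S) (𝓝 64) := by
    have hcont : ContinuousAt (fun p : ℝ × ℝ =>
        -4 * (sl2F1 p.1 1 p.2 * sl2F2 p.1 1 p.2) / p.1 ^ 2 / (-1)) (1, 0) := by
      unfold sl2F1 sl2F2
      refine ContinuousAt.div_const (ContinuousAt.div ?_ ?_ (by norm_num)) _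
      · fun_prop
      · fun_prop
    have := hcont.tendsto.comp (hAB1.prodMk_nhds hCB)
    refine this.trans_eq ?_
    norm_num [sl2F1, sl2F2]
  have hlin : Tendsto (fun t => S - t) (𝓝[<] S) (𝓝 0) := by
    have : Tendsto (fun t : ℝ => S - t) (𝓝 S) (𝓝 (S - S)) := tendsto_const_nhds.sub tendsto_id
    rw [sub_self] at this
    exact this.mono_left nhdsWithin_le_nhds
  have hC2 : Tendsto (fun t => C t ^ 2 / (S - t)) (𝓝[<] S) (𝓝 64) := by
    refine HasDerivAt.lhopital_zero_left_on_Ioo hS (f' := fun t =>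
      -4 * (sl2F1 (A t / B t) 1 (C t / B t) * sl2F2 (A t / B t) 1 (C t / B t)) / (A t / B t) ^ 2)
      (g' := fun _ => -1) ?_ ?_ (fun _ _ => by norm_num) ?_ hlin hq
    · intro t ht
      obtain ⟨⟨ha, hb, hc⟩, -, -, dC⟩ := h t (Ioo_subset_Ico_self ht)
      refine (dC.pow 2).congr_deriv ?_
      unfold sl2F1 sl2F2
      simp only [Nat.cast_ofNat, Nat.add_one_sub_one, pow_one]
      field_simp
      ring
    · intro t _
      simpa using (hasDerivAt_id t).const_sub S
    · simpa using hC.pow 2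
  have hCs : Tendsto (fun t => C t / Real.sqrt (S - t)) (𝓝[<] S) (𝓝 8) := by
    have := (Real.continuous_sqrt.tendsto 64).comp hC2
    rw [show (64 : ℝ) = 8 ^ 2 by norm_num, Real.sqrt_sq (by norm_num)] at this
    refine this.congr' ?_
    filter_upwards [hev] with t ht
    simp only [Function.comp]
    rw [Real.sqrt_div (sq_nonneg _), Real.sqrt_sq (h t ht).1.2.2.le]
  have hprod : ∀ f : ℝ → ℝ, Tendsto (fun t => f t * C t) (𝓝[<] S) (𝓝 L) →
      Tendsto (fun t => f t * Real.sqrt (S - t) / (L / 8)) (𝓝[<] S) (𝓝 1) := by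
    intro f hf
    have := (hf.div hCs (by norm_num)).div_const (L / 8)
    rw [div_self (by positivity)] at this
    refine this.congr' ?_
    filter_upwards [hev] with t ht
    have h1 := (h t ht).1.2.2.ne'
    have h2 : Real.sqrt (S - t) ≠ 0 := (Real.sqrt_pos.2 (sub_pos.2 ht.2)).ne'
    simp only [Pi.div_apply]
    field_simp
  refine ⟨?_, ⟨L / 8, by positivity, hprod A hL, hprod B (hLNeq ▸ hN)⟩, hAtop, hBtop, hAB1⟩
  have := hCs.div_const 8
  rw [div_self (by norm_num)] at this
  refine this.congr fun t => ?_
  rw [div_div, mul_comm]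

end Flow

/-- For a maximal positive solution of the `SL(2,ℝ)` negative cross curvature flow with
`B0 > C0 > 0`, `A0 > 0`, `F1(0) < 0`, `F2(0) < 0` and `A0 + C0 ≤ B0`: the solution blows
up at a finite time `T0 > 0`, and as `t → T0⁻` one has `C ∼ 8√(T0 - t)`,
`A, B ∼ E/√(T0 - t)` for some constant `E > 0`; in particular `A, B → ∞`, `C → 0` and
`A/B → 1`. -/
theorem sl2_blowup_special_case
    (A0 B0 C0 : ℝ) (hA0 : 0 < A0) (hC0 : 0 < C0) (hB0C0 : B0 > C0)
    (hACB : A0 + C0 ≤ B0)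
    (A B C : ℝ → ℝ) (T : EReal) (hT : 0 < T)
    (hmax : IsMaxSolSL2 A B C T)
    (hinitA : A 0 = A0) (hinitB : B 0 = B0) (hinitC : C 0 = C0)
    (hF1_0 : sl2F1 A0 B0 C0 < 0) (hF2_0 : sl2F2 A0 B0 C0 < 0) :
    ∃ T0 : ℝ, 0 < T0 ∧ T = (T0 : EReal) ∧
      Filter.Tendsto (fun t => C t / (8 * Real.sqrt (T0 - t)))
        (nhdsWithin T0 (Set.Iio T0)) (nhds 1) ∧
      (∃ E : ℝ, 0 < E ∧
        Filter.Tendsto (fun t => A t * Real.sqrt (T0 - t) / E)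
          (nhdsWithin T0 (Set.Iio T0)) (nhds 1) ∧
        Filter.Tendsto (fun t => B t * Real.sqrt (T0 - t) / E)
          (nhdsWithin T0 (Set.Iio T0)) (nhds 1)) ∧
      Filter.Tendsto A (nhdsWithin T0 (Set.Iio T0)) Filter.atTop ∧
      Filter.Tendsto B (nhdsWithin T0 (Set.Iio T0)) Filter.atTop ∧
      Filter.Tendsto C (nhdsWithin T0 (Set.Iio T0)) (nhds 0) ∧
      Filter.Tendsto (fun t => A t / B t) (nhdsWithin T0 (Set.Iio T0)) (nhds 1) := by
  subst hinitA hinitB hinitC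
  obtain ⟨hsol, hnoext⟩ := hmax
  have hsub : ∀ S : ℝ, (S : EReal) ≤ T → IsSolSL2 A B C (Set.Ico 0 S) := fun S hST t ht =>
    hsol t ⟨ht.1, (EReal.coe_lt_coe_iff.2 ht.2).trans_le hST⟩
  induction T using EReal.rec with
  | bot => exact absurd hT (not_lt.2 bot_le)
  | top =>
    exfalso
    have hK : 0 ≤ (B 0 * C 0) ^ 2 / (32 * A 0 ^ 2) := by positivity
    have := lifespan_bound (hsub ((B 0 * C 0) ^ 2 / (32 * A 0 ^ 2) + 1) le_top) hACB hF1_0.le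
      (by linarith)
    linarith
  | coe T0 =>
    have hT0 : 0 < T0 := by exact_mod_cast hT
    have h := hsub T0 le_rfl
    have hC := tendsto_C_zero h hACB hF1_0.le hT0 (by
      rintro ⟨A', B', C', S', hS', hsol', heq⟩
      refine hnoext A' B' C' S' (EReal.coe_lt_coe_iff.2 hS') ?_ ?_
      · exact fun t ht => hsol' t ⟨ht.1, EReal.coe_lt_coe_iff.1 ht.2⟩
      · exact fun t _ ht => heq t (EReal.coe_lt_coe_iff.1 ht))
    obtain ⟨h1, h2, h3, h4, h5⟩ := asymptotics h hACB hF1_0.le hT0 hC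
    exact ⟨T0, hT0, rfl, h1, h2, h3, h4, hC, h5⟩
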